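/- arXiv:1501.04513 — 2 statements merged into one kernel-verified Lean document; each statement's English description precedes it below -/
import Mathlib

section
/- If f, g : ℝ^N → (−∞, ∞] are Borel measurable, then the infimal convolution f□g : ℝ^N → [−∞, ∞] is Lebesgue measurable. -/
open MeasureTheory Filter Set
open scoped ENNReal NNReal Pointwise

noncomputable section

/-- `ℝ^N` with the Euclidean structure and Lebesgue measure. -/
abbrev ES (N : ℕ) := EuclideanSpace ℝ (Fin N)

variable {N : ℕ}

/-- The operation `(f ⊼ g)(x) = sup_y min (f (x - y)) (g y)` for extended-real valued
functions. -/
def supMinE (f g : ES N → EReal) (x : ES N) : EReal := ⨆ y, min (f (x - y)) (g y)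

/-- The operation `(f ⊻ g)(x) = inf_y max (f (x - y)) (g y)` for extended-real valued
functions. -/
def infMaxE (f g : ES N → EReal) (x : ES N) : EReal := ⨅ y, max (f (x - y)) (g y)

/-- The infimal convolution `(f □ g)(x) = inf_y (f (x - y) + g y)`. -/
def infConvE (f g : ES N → EReal) (x : ES N) : EReal := ⨅ y, (f (x - y) + g y)

/-- The operation `(f ⊼ g)(x) = sup_y min (f (x - y)) (g y)` for `[0,∞]`-valued functions. -/
def supMin (f g : ES N → ℝ≥0∞) (x : ES N) : ℝ≥0∞ := ⨆ y, min (f (x - y)) (g y)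

/-- A Young function: a nonconstant, nondecreasing, convex, left-continuous
`φ : [0,∞] → [0,∞]` with `φ 0 = 0`. -/
structure IsYoungFunction (φ : ℝ≥0∞ → ℝ≥0∞) : Prop where
  nonconstant : ∃ x y, φ x ≠ φ y
  map_zero : φ 0 = 0
  mono : Monotone φ
  convex : ∀ ⦃a b x y : ℝ≥0∞⦄, a + b = 1 → φ (a * x + b * y) ≤ a * φ x + b * φ y
  left_continuous : ∀ x, ContinuousWithinAt φ (Set.Iio x) x

/-- The Luxemburg norm `‖h‖_φ = inf {r > 0 | ∫ φ (r⁻¹ |h|) ≤ 1}` (`= ∞` if no such `r`),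
for a nonnegative function `h`. -/
def luxNorm (φ : ℝ≥0∞ → ℝ≥0∞) (h : ES N → ℝ≥0∞) : ℝ≥0∞ :=
  sInf {r : ℝ≥0∞ | 0 < r ∧ ∫⁻ x, φ (r⁻¹ * h x) ≤ 1}

/-- The nonnegative part of an extended real, as an element of `[0,∞]`. -/
def toENN (a : EReal) : ℝ≥0∞ := if a = ⊤ then ⊤ else ENNReal.ofReal a.toReal

/-- The reciprocal `1/a ∈ [0,∞]` of an extended real (intended for `a ≥ 0`), with the
conventions `1/0 = ∞` and `1/∞ = 0`. -/
def eInv (a : EReal) : ℝ≥0∞ := (toENN a)⁻¹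

/-- The enclosing radius of a set `X ⊆ ℝ^N`: the infimum of the radii of closed balls
containing `X` (`0` for `X = ∅`, `∞` if `X` is unbounded). -/
def encRadius (X : Set (ES N)) : ℝ≥0∞ := sInf {r : ℝ≥0∞ | ∃ c : ES N, ∀ x ∈ X, edist x c ≤ r}

/-- The transform `f̂(x) = γ_f^+(|x|)` where `γ_f^+(t) = inf {ξ | ρ_f^+(ξ) ≤ t}` and
`ρ_f^+(ξ)` is the enclosing radius of the upper level set `{f > ξ}`. -/
def hatE (f : ES N → EReal) (x : ES N) : EReal :=
  sInf {ξ : EReal | encRadius {y | ξ < f y} ≤ (‖x‖₊ : ℝ≥0∞)}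

/-- The lower transform `f̌ = -((-f)^)`. -/
def checkE (f : ES N → EReal) (x : ES N) : EReal := - hatE (fun y => - f y) x

/-- The transform `f̂` for `[0,∞]`-valued functions. -/
def hatT (f : ES N → ℝ≥0∞) (x : ES N) : ℝ≥0∞ :=
  sInf {ξ : ℝ≥0∞ | encRadius {y | ξ < f y} ≤ (‖x‖₊ : ℝ≥0∞)}

/-- The lower transform `f̌(x) = γ_f^-(|x|)`, `γ_f^-(t) = sup {ξ | ρ({f < ξ}) ≤ t}`,
for `[0,∞]`-valued functions. -/
def checkT (f : ES N → ℝ≥0∞) (x : ES N) : ℝ≥0∞ :=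
  sSup {ξ : ℝ≥0∞ | encRadius {y | f y < ξ} ≤ (‖x‖₊ : ℝ≥0∞)}

/-- The `L^p` "norm" (`p ∈ [1,∞]`, essential supremum when `p = ∞`) of a `[0,∞]`-valued
function. -/
def pNorm (p : ℝ≥0∞) (h : ES N → ℝ≥0∞) : ℝ≥0∞ :=
  if p = ∞ then essSup h volume else (∫⁻ x, h x ^ p.toReal) ^ (1 / p.toReal)

theorem isCompact_Iic_nat_pi (m : ℕ → ℕ) : IsCompact (Iic m) := by
  rw [← pi_univ_Iic]
  exact isCompact_univ_pi fun i => (finite_Iic _).isCompact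

/-- An open set of `ℕ → ℕ` containing `{x | x ≤ m}` already contains all the sequences bounded by
`m` on some finite initial segment. -/
theorem exists_setOf_forall_lt_le_subset {m : ℕ → ℕ} {V : Set (ℕ → ℕ)} (hV : IsOpen V)
    (hmV : Iic m ⊆ V) : ∃ k, {x : ℕ → ℕ | ∀ i < k, x i ≤ m i} ⊆ V := by
  by_contra! h
  simp only [Set.not_subset] at h
  choose x hx hxV using h
  obtain ⟨y, hy, φ, hφ, hlim⟩ := (isCompact_Iic_nat_pi m).tendsto_subseq (x := fun k => x k ⊓ m)
    fun k => mem_Iic.2 inf_le_right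
  have hlim' : Tendsto (x ∘ φ) atTop (nhds y) := by
    rw [tendsto_pi_nhds] at hlim ⊢
    intro i
    refine (hlim i).congr' ?_
    filter_upwards [eventually_gt_atTop i] with k hk
    simpa using hx (φ k) i (hk.trans_le (hφ.id_le k))
  exact hV.isClosed_compl.mem_of_tendsto hlim' (Eventually.of_forall fun k => hxV (φ k)) (hmV hy)

/-- The range of a continuous map on `ℕ → ℕ` is approximated in outer measure from inside by
compact sets. -/
theorem exists_isCompact_subset_range_le_measure {α : Type*} [TopologicalSpace α]
    [MeasurableSpace α] {μ : Measure α} [μ.OuterRegular] {F : (ℕ → ℕ) → α} (hF : Continuous F)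
    {c : ℝ≥0∞} (hc : c < μ (range F)) : ∃ K ⊆ range F, IsCompact K ∧ c ≤ μ K := by
  have step (k : ℕ) (S : {S : Set (ℕ → ℕ) // c < μ (F '' S)}) :
      ∃ n, c < μ (F '' (S.1 ∩ {x | x k ≤ n})) := by
    have hmono : Monotone fun n => F '' (S.1 ∩ {x | x k ≤ n}) := fun a b hab =>
      image_mono (inter_subset_inter_right _ fun x hx => le_trans hx hab)
    have hunion : F '' S.1 = ⋃ n, F '' (S.1 ∩ {x | x k ≤ n}) := by
      rw [← image_iUnion, ← inter_iUnion, iUnion_eq_univ_iff.2 fun x => ⟨x k, le_refl (x k)⟩,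
        inter_univ]
    have h := S.2
    rwa [hunion, hmono.measure_iUnion, lt_iSup_iff] at h
  choose bound hbound using step
  let S : ℕ → {S : Set (ℕ → ℕ) // c < μ (F '' S)} := fun k =>
    Nat.rec ⟨univ, by rwa [image_univ]⟩ (fun k T => ⟨_, hbound k T⟩) k
  let m : ℕ → ℕ := fun k => bound k (S k)
  have hS (k : ℕ) : (S k).1 ⊆ {x | ∀ i < k, x i ≤ m i} := by
    induction k with
    | zero => simp
    | succ k ih =>
      rintro x ⟨hx, hxk⟩ i hi
      rcases Nat.lt_succ_iff_lt_or_eq.1 hi with hi | rfl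
      exacts [ih hx i hi, hxk]
  refine ⟨F '' Iic m, image_subset_range _ _, (isCompact_Iic_nat_pi m).image hF, ?_⟩
  rw [Set.measure_eq_iInf_isOpen]
  refine le_iInf₂ fun U hU => le_iInf fun hUo => ?_
  obtain ⟨k, hk⟩ := exists_setOf_forall_lt_le_subset (hUo.preimage hF) (image_subset_iff.1 hU)
  exact (S k).2.le.trans (measure_mono (image_subset_iff.2 ((hS k).trans hk)))

/-- Analytic sets are universally measurable. -/
theorem MeasureTheory.AnalyticSet.nullMeasurableSet {α : Type*} [TopologicalSpace α]
    [TopologicalSpace.MetrizableSpace α] [MeasurableSpace α] [BorelSpace α] {A : Set α}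
    (hA : AnalyticSet A) (μ : Measure α) [SFinite μ] : NullMeasurableSet A μ := by
  refine NullMeasurableSet.mono_ac ?_ (absolutelyContinuous_toFinite μ)
  rw [AnalyticSet] at hA
  obtain rfl | ⟨F, hF, rfl⟩ := hA
  · exact .empty
  rcases eq_zero_or_pos (μ.toFinite (range F)) with h0 | hpos
  · exact .of_null h0
  obtain ⟨c, -, hc, hlim⟩ := exists_seq_strictMono_tendsto' hpos
  choose K hKF hK hcK using fun n => exists_isCompact_subset_range_le_measure hF (hc n).2
  have hmeas : MeasurableSet (⋃ n, K n) := .iUnion fun n => (hK n).measurableSet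
  refine hmeas.nullMeasurableSet.congr (ae_eq_of_subset_of_measure_ge (iUnion_subset hKF) ?_
    hmeas.nullMeasurableSet (measure_ne_top _ _))
  exact le_of_tendsto' hlim fun n => (hcK n).trans (measure_mono (subset_iUnion K n))

theorem infConvE_lebesgue_measurable {N : ℕ}
    (f g : ES N → EReal) (hf : Measurable f) (hg : Measurable g)
    (hf' : ∀ x, f x ≠ ⊥) (hg' : ∀ x, g x ≠ ⊥) :
    AEMeasurable (infConvE f g) (volume : Measure (ES N)) := by
  refine NullMeasurable.aemeasurable
    (measurable_of_Iio (δ := NullMeasurableSpace (ES N) volume) fun c => ?_)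
  have himage : infConvE f g ⁻¹' Iio c =
      Prod.fst '' {p : ES N × ES N | f (p.1 - p.2) + g p.2 < c} := by
    ext x
    simp [infConvE, iInf_lt_iff]
  have hmeas : MeasurableSet {p : ES N × ES N | f (p.1 - p.2) + g p.2 < c} :=
    measurableSet_lt (by fun_prop) measurable_const
  have h := (hmeas.analyticSet_image measurable_fst).nullMeasurableSet (volume : Measure (ES N))
  rwa [← himage] at h

end
end

section
/- If f, g : ℝ^N → [0, ∞] are Borel measurable, then ∫_{ℝ^N} (f⊼g) dμ_N ≤ 2^{N−1} ( ∫_{ℝ^N} f̂ dμ_N + ∫_{ℝ^N} ĝ dμ_N ). -/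
open MeasureTheory Filter Set
open scoped ENNReal NNReal Pointwise

noncomputable section

variable {N : ℕ}

/-- Layer cake formula with strict superlevel sets, for `[0,∞]`-valued functions. -/
theorem lintegral_eq_setLIntegral_measure_ofReal_lt {α : Type*} [MeasurableSpace α]
    (μ : Measure α) [SFinite μ] {h : α → ℝ≥0∞} (hh : Measurable h) :
    ∫⁻ x, h x ∂μ = ∫⁻ t in Ioi (0 : ℝ), μ {x | ENNReal.ofReal t < h x} := by
  have hs : MeasurableSet {p : α × ℝ | ENNReal.ofReal p.2 < h p.1} :=
    measurableSet_lt (by fun_prop) (by fun_prop)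
  have key := (Measure.prod_apply (μ := μ) (ν := volume.restrict (Ioi (0 : ℝ))) hs).symm.trans
    (Measure.prod_apply_symm hs)
  refine Eq.trans (lintegral_congr fun x => ?_) key
  rw [Measure.restrict_apply (measurable_prodMk_left hs)]
  rcases eq_or_ne (h x) ∞ with hx | hx
  · simp [hx]
  · have : Prod.mk x ⁻¹' {p : α × ℝ | ENNReal.ofReal p.2 < h p.1} ∩ Ioi (0 : ℝ)
        = Ioo 0 (h x).toReal := by
      ext t
      simp only [mem_inter_iff, mem_preimage, mem_ofPred_eq, mem_Ioi, mem_Ioo]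
      rw [and_comm]
      exact and_congr_right fun ht => ENNReal.ofReal_lt_iff_lt_toReal ht.le hx
    rw [this, Real.volume_Ioo, sub_zero, ENNReal.ofReal_toReal hx]

/-- Layer cake formula with superlevel sets, for `[0,∞]`-valued functions. -/
theorem lintegral_eq_setLIntegral_measure_ofReal_le {α : Type*} [MeasurableSpace α]
    (μ : Measure α) [SFinite μ] {h : α → ℝ≥0∞} (hh : Measurable h) :
    ∫⁻ x, h x ∂μ = ∫⁻ t in Ioi (0 : ℝ), μ {x | ENNReal.ofReal t ≤ h x} := by
  have hs : MeasurableSet {p : α × ℝ | ENNReal.ofReal p.2 ≤ h p.1} :=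
    measurableSet_le (by fun_prop) (by fun_prop)
  have key := (Measure.prod_apply (μ := μ) (ν := volume.restrict (Ioi (0 : ℝ))) hs).symm.trans
    (Measure.prod_apply_symm hs)
  refine Eq.trans (lintegral_congr fun x => ?_) key
  rw [Measure.restrict_apply (measurable_prodMk_left hs)]
  rcases eq_or_ne (h x) ∞ with hx | hx
  · simp [hx]
  · have : Prod.mk x ⁻¹' {p : α × ℝ | ENNReal.ofReal p.2 ≤ h p.1} ∩ Ioi (0 : ℝ)
        = Ioc 0 (h x).toReal := by
      ext t
      simp only [mem_inter_iff, mem_preimage, mem_ofPred_eq, mem_Ioi, mem_Ioc]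
      rw [and_comm]
      exact and_congr_right fun ht => ENNReal.ofReal_le_iff_le_toReal hx
    rw [this, Real.volume_Ioc, sub_zero, ENNReal.ofReal_toReal hx]

theorem ENNReal.add_pow_le_two_pow_mul (a b : ℝ≥0∞) {n : ℕ} (hn : n ≠ 0) :
    (a + b) ^ n ≤ 2 ^ (n - 1) * (a ^ n + b ^ n) := by
  induction a with
  | top => simp [hn]
  | coe a =>
    induction b with
    | top => simp [hn]
    | coe b =>
      have h : (a + b) ^ n ≤ 2 ^ (n - 1) * (a ^ n + b ^ n) := add_pow_le zero_le zero_le n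
      exact_mod_cast h

theorem encRadius_mono {X Y : Set (ES N)} (h : X ⊆ Y) : encRadius X ≤ encRadius Y :=
  sInf_le_sInf fun _ ⟨c, hc⟩ => ⟨c, fun x hx => hc x (h hx)⟩

theorem encRadius_add_le (X Y : Set (ES N)) :
    encRadius (X + Y) ≤ encRadius X + encRadius Y := by
  have key : ∀ r, (∃ c, ∀ x ∈ X, edist x c ≤ r) → ∀ s, (∃ c, ∀ y ∈ Y, edist y c ≤ s) →
      encRadius (X + Y) ≤ r + s := by
    rintro r ⟨c, hc⟩ s ⟨d, hd⟩
    refine sInf_le ⟨c + d, ?_⟩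
    rintro _ ⟨x, hx, y, hy, rfl⟩
    exact (edist_add_add_le x y c d).trans (add_le_add (hc x hx) (hd y hy))
  refine ENNReal.le_of_forall_pos_le_add fun ε hε hfin => ?_
  have hε2 : (ε / 2 : ℝ≥0∞) ≠ 0 := by simpa using hε.ne'
  obtain ⟨hX, hY⟩ := ENNReal.add_lt_top.1 hfin
  obtain ⟨r, hr, hrlt⟩ := sInf_lt_iff.1 (ENNReal.lt_add_right hX.ne hε2)
  obtain ⟨s, hs, hslt⟩ := sInf_lt_iff.1 (ENNReal.lt_add_right hY.ne hε2)
  calc encRadius (X + Y) ≤ r + s := key r hr s hs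
    _ ≤ (encRadius X + ε / 2) + (encRadius Y + ε / 2) := add_le_add hrlt.le hslt.le
    _ = encRadius X + encRadius Y + ε := by
      rw [add_add_add_comm, ENNReal.add_halves]

theorem volume_le_encRadius_pow_mul (hN : 0 < N) (X : Set (ES N)) :
    volume X ≤ encRadius X ^ N * volume (Metric.ball (0 : ES N) 1) := by
  have : Nonempty (Fin N) := ⟨⟨0, hN⟩⟩
  set ω := volume (Metric.ball (0 : ES N) 1)
  have hω0 : ω ≠ 0 := (Metric.measure_ball_pos volume _ one_pos).ne'
  have hωt : ω ≠ ∞ := measure_ball_lt_top.ne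
  have hcont : Continuous fun r : ℝ≥0∞ => r ^ N * ω :=
    (ENNReal.continuous_mul_const hωt).comp (ENNReal.continuous_pow N)
  have hmono : Monotone fun r : ℝ≥0∞ => r ^ N * ω := fun a b hab => by
    dsimp only
    gcongr
  have hmap := hmono.map_csInf_of_continuousAt
    (A := {r : ℝ≥0∞ | ∃ c : ES N, ∀ x ∈ X, edist x c ≤ r}) hcont.continuousAt
    ⟨∞, 0, fun _ _ => le_top⟩
  rw [encRadius, hmap]
  refine le_sInf ?_
  rintro _ ⟨r, ⟨c, hc⟩, rfl⟩
  induction r with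
  | top => simp [hN.ne', hω0]
  | coe r =>
    calc volume X ≤ volume (Metric.closedBall c (r : ℝ)) := by
          refine measure_mono fun x hx => ?_
          have := hc x hx
          rw [edist_nndist] at this
          exact_mod_cast this
      _ = (r : ℝ≥0∞) ^ N * ω := by
          rw [Measure.addHaar_closedBall _ _ r.coe_nonneg, finrank_euclideanSpace_fin,
            ENNReal.ofReal_pow r.coe_nonneg, ENNReal.ofReal_coe_nnreal]

theorem pow_mul_volume_ball_le (hN : 0 < N) (r : ℝ≥0∞) :
    r ^ N * volume (Metric.ball (0 : ES N) 1) ≤ volume {x : ES N | (‖x‖₊ : ℝ≥0∞) < r} := by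
  have : Nonempty (Fin N) := ⟨⟨0, hN⟩⟩
  induction r with
  | top => simp [measure_univ_of_isAddLeftInvariant]
  | coe r =>
    have hset : {x : ES N | (‖x‖₊ : ℝ≥0∞) < r} = Metric.ball 0 (r : ℝ) := by
      ext x
      rw [mem_ofPred_eq, mem_ball_zero_iff]
      norm_cast
    rw [hset, Measure.addHaar_ball volume (0 : ES N) r.coe_nonneg, finrank_euclideanSpace_fin,
      ENNReal.ofReal_pow r.coe_nonneg, ENNReal.ofReal_coe_nnreal]

theorem measurable_hatT (f : ES N → ℝ≥0∞) : Measurable (hatT f) := by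
  have hanti : Antitone fun t : ℝ≥0∞ => sInf {ξ : ℝ≥0∞ | encRadius {y | ξ < f y} ≤ t} :=
    fun s t hst => sInf_le_sInf fun _ hξ => le_trans hξ hst
  exact hanti.measurable.comp measurable_nnnorm.coe_nnreal_ennreal

theorem le_hatT_of_lt_encRadius (f : ES N → ℝ≥0∞) {ξ : ℝ≥0∞} {x : ES N}
    (hx : (‖x‖₊ : ℝ≥0∞) < encRadius {y | ξ < f y}) : ξ ≤ hatT f x := by
  refine le_sInf fun η hη => ?_
  by_contra! hlt
  exact (hx.trans_le (encRadius_mono fun y (hy : ξ < f y) => hlt.trans hy)).not_ge hη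

theorem encRadius_pow_mul_le_volume_hatT (hN : 0 < N) (f : ES N → ℝ≥0∞) (ξ : ℝ≥0∞) :
    encRadius {y | ξ < f y} ^ N * volume (Metric.ball (0 : ES N) 1)
      ≤ volume {x | ξ ≤ hatT f x} :=
  (pow_mul_volume_ball_le hN _).trans
    (measure_mono fun _ hx => le_hatT_of_lt_encRadius f hx)

theorem setOf_lt_supMin_subset (f g : ES N → ℝ≥0∞) (ξ : ℝ≥0∞) :
    {x | ξ < supMin f g x} ⊆ {x | ξ < f x} + {x | ξ < g x} := by
  intro x hx
  obtain ⟨y, hy⟩ := lt_iSup_iff.1 (show ξ < ⨆ y, min (f (x - y)) (g y) from hx)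
  exact ⟨x - y, (lt_min_iff.1 hy).1, y, (lt_min_iff.1 hy).2, sub_add_cancel x y⟩

theorem volume_lt_supMin_le (hN : 0 < N) (f g : ES N → ℝ≥0∞) (ξ : ℝ≥0∞) :
    volume {x | ξ < supMin f g x}
      ≤ 2 ^ (N - 1) * (volume {x | ξ ≤ hatT f x} + volume {x | ξ ≤ hatT g x}) := by
  set F := {x | ξ < f x}
  set G := {x | ξ < g x}
  set ω := volume (Metric.ball (0 : ES N) 1)
  calc volume {x | ξ < supMin f g x} ≤ volume (F + G) :=
        measure_mono (setOf_lt_supMin_subset f g ξ)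
    _ ≤ encRadius (F + G) ^ N * ω := volume_le_encRadius_pow_mul hN _
    _ ≤ (encRadius F + encRadius G) ^ N * ω := by
        gcongr
        exact encRadius_add_le F G
    _ ≤ 2 ^ (N - 1) * (encRadius F ^ N + encRadius G ^ N) * ω := by
        gcongr
        exact ENNReal.add_pow_le_two_pow_mul _ _ hN.ne'
    _ = 2 ^ (N - 1) * (encRadius F ^ N * ω + encRadius G ^ N * ω) := by ring
    _ ≤ _ := by
        gcongr
        · exact encRadius_pow_mul_le_volume_hatT hN f ξ
        · exact encRadius_pow_mul_le_volume_hatT hN g ξ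

theorem lintegral_supMin_le_pow_mul_add {N : ℕ} (hN : 0 < N)
    (f g : ES N → ℝ≥0∞) (hf : Measurable f) (hg : Measurable g) :
    ∫⁻ x, supMin f g x ≤ 2 ^ (N - 1) * ((∫⁻ x, hatT f x) + ∫⁻ x, hatT g x) := by
  obtain ⟨h, hm, hle, heq⟩ := exists_measurable_le_lintegral_eq volume (supMin f g)
  rw [heq, lintegral_eq_setLIntegral_measure_ofReal_lt volume hm,
    lintegral_eq_setLIntegral_measure_ofReal_le volume (measurable_hatT f),
    lintegral_eq_setLIntegral_measure_ofReal_le volume (measurable_hatT g)]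
  have hanti : Antitone fun t : ℝ => volume {x | ENNReal.ofReal t ≤ hatT f x} :=
    fun s t hst => measure_mono fun x hx => (ENNReal.ofReal_le_ofReal hst).trans hx
  rw [← lintegral_add_left hanti.measurable, ← lintegral_const_mul' _ _ (by finiteness)]
  refine lintegral_mono fun t => ?_
  exact (measure_mono fun x hx => lt_of_lt_of_le hx (hle x)).trans
    (volume_lt_supMin_le hN f g (ENNReal.ofReal t))

end
end
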